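/- Let F be an infinite field with char(F) ≠ 2 and let d = 1. Then the maximal degree D_max of elements of a minimal homogeneous system of generators of the algebra of O(3)-invariants of a single generic 3×3 matrix equals 6. -/

import Mathlib

open Matrix MvPolynomial

/-- The polynomial ring `R = F[x_{ij}(k)]`, `1 ≤ i,j ≤ 3`, `1 ≤ k ≤ d`. -/
abbrev Rpoly (F : Type) [Field F] (d : ℕ) := MvPolynomial (Fin 3 × Fin 3 × Fin d) F

variable (F : Type) [Field F] (d : ℕ)

/-- The `k`-th generic 3×3 matrix `X_k`. -/
noncomputable def genMat (k : Fin d) : Matrix (Fin 3) (Fin 3) (Rpoly F d) :=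
  Matrix.of fun i j => MvPolynomial.X (i, j, k)

/-- The action of `g` on `R` by simultaneous conjugation: entries of `X_k` are replaced
by the entries of `gᵀ X_k g`. -/
noncomputable def actHom (g : Matrix (Fin 3) (Fin 3) F) : Rpoly F d →ₐ[F] Rpoly F d :=
  MvPolynomial.aeval fun p : Fin 3 × Fin 3 × Fin d =>
    ((g.map (algebraMap F (Rpoly F d)))ᵀ * genMat F d p.2.2 *
      g.map (algebraMap F (Rpoly F d))) p.1 p.2.1

/-- The algebra `R^{O(3)}` of invariants of the orthogonal group. -/
noncomputable def invAlg : Subalgebra F (Rpoly F d) where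
  carrier := {f | ∀ g : Matrix (Fin 3) (Fin 3) F, gᵀ * g = 1 → actHom F d g f = f}
  mul_mem' := by
    intro a b ha hb g hg
    rw [_root_.map_mul, ha g hg, hb g hg]
  add_mem' := by
    intro a b ha hb g hg
    rw [_root_.map_add, ha g hg, hb g hg]
  one_mem' := by
    intro g hg
    exact map_one _
  algebraMap_mem' := by
    intro r g hg
    exact (actHom F d g).commutes r

/-- The ideal of `R^{O(3)}` generated by all homogeneous invariants of positive degree. -/
noncomputable def plusIdeal : Ideal (invAlg F d) :=
  Ideal.span {f | ∃ n : ℕ, 0 < n ∧ MvPolynomial.IsHomogeneous (f : Rpoly F d) n}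

/-- The set of decomposable invariants: elements of `R^{O(3)}` lying in the square of the
ideal generated by all homogeneous invariants of positive degree. -/
noncomputable def decompSet : Set (Rpoly F d) :=
  Subtype.val '' ((plusIdeal F d ^ 2 : Ideal (invAlg F d)) : Set (invAlg F d))


section Aux1

/-- The seven basic invariants as polynomials in the entries of the symmetric matrix
`[[a,d,e],[d,b,f],[e,f,c]]` and the vector `(x,y,z)`. -/
def coreG {R : Type*} [CommRing R] (a b c d e f x y z : R) : Fin 7 → R :=
  ![a + b + c, a*b + a*c + b*c - d^2 - e^2 - f^2,
    a*b*c + 2*d*e*f - a*f^2 - b*e^2 - c*d^2,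
    x^2 + y^2 + z^2,
    x*(a*x+d*y+e*z) + y*(d*x+b*y+f*z) + z*(e*x+f*y+c*z),
    (a*x+d*y+e*z)^2 + (d*x+b*y+f*z)^2 + (e*x+f*y+c*z)^2,
    (Matrix.of ![![x, a*x+d*y+e*z, a*(a*x+d*y+e*z)+d*(d*x+b*y+f*z)+e*(e*x+f*y+c*z)],
      ![y, d*x+b*y+f*z, d*(a*x+d*y+e*z)+b*(d*x+b*y+f*z)+f*(e*x+f*y+c*z)],
      ![z, e*x+f*y+c*z, e*(a*x+d*y+e*z)+f*(d*x+b*y+f*z)+c*(e*x+f*y+c*z)]]).det]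

/-- The seven basic invariants of a matrix. -/
def gG {R : Type*} [CommRing R] (M : Matrix (Fin 3) (Fin 3) R) : Fin 7 → R :=
  coreG (M 0 0 + M 0 0) (M 1 1 + M 1 1) (M 2 2 + M 2 2) (M 0 1 + M 1 0) (M 0 2 + M 2 0)
    (M 1 2 + M 2 1) (M 2 1 - M 1 2) (M 0 2 - M 2 0) (M 1 0 - M 0 1)

lemma coreG_map {R S : Type*} [CommRing R] [CommRing S] (φ : R →+* S) (a b c d e f x y z : R)
    (i : Fin 7) : φ (coreG a b c d e f x y z i) =
      coreG (φ a) (φ b) (φ c) (φ d) (φ e) (φ f) (φ x) (φ y) (φ z) i := by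
  fin_cases i <;> simp [coreG, Matrix.det_fin_three, map_ofNat φ 2]

lemma gG_map {R S : Type*} [CommRing R] [CommRing S] (φ : R →+* S)
    (M : Matrix (Fin 3) (Fin 3) R) (i : Fin 7) : φ (gG M i) = gG (M.map φ) i := by
  simp [gG, coreG_map]

/-- the vector of trace expressions determining the invariants -/
def trG {R : Type*} [CommRing R] (S A : Matrix (Fin 3) (Fin 3) R) : Fin 7 → R :=
  ![S.trace, (S*S).trace, S.det, (A*A).trace, (A*A*S).trace, (A*A*S*S).trace,
    (A*A*S*S*A*S).trace]

lemma core_tr {R : Type*} [CommRing R] (a b c d e f x y z : R) :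
    ∀ S A : Matrix (Fin 3) (Fin 3) R, S = Matrix.of ![![a,d,e],![d,b,f],![e,f,c]] →
      A = Matrix.of ![![0,-z,y],![z,0,-x],![-y,x,0]] →
    coreG a b c d e f x y z 0 = trG S A 0 ∧
    2 * coreG a b c d e f x y z 1 = trG S A 0 ^ 2 - trG S A 1 ∧
    coreG a b c d e f x y z 2 = trG S A 2 ∧
    2 * coreG a b c d e f x y z 3 = - trG S A 3 ∧
    2 * coreG a b c d e f x y z 4 = 2 * trG S A 4 - trG S A 3 * trG S A 0 ∧
    2 * coreG a b c d e f x y z 5 = 2 * trG S A 5 - trG S A 3 * trG S A 1 ∧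
    coreG a b c d e f x y z 6 = trG S A 6 := by
  rintro S A rfl rfl
  refine ⟨?_, ?_, ?_, ?_, ?_, ?_, ?_⟩ <;>
    simp [coreG, trG, Matrix.trace_fin_three, Matrix.det_fin_three] <;> ring

lemma trG_conj {R : Type*} [CommRing R] (g S A : Matrix (Fin 3) (Fin 3) R) (hg : gᵀ * g = 1) :
    trG (gᵀ * S * g) (gᵀ * A * g) = trG S A := by
  have hg' : g * gᵀ = 1 := mul_eq_one_comm.mp hg
  have h1 : ∀ P Q : Matrix (Fin 3) (Fin 3) R, (gᵀ * P * g) * (gᵀ * Q * g) = gᵀ * (P * Q) * g := by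
    intro P Q
    calc _ = gᵀ * P * (g * gᵀ) * Q * g := by simp only [Matrix.mul_assoc]
      _ = _ := by rw [hg']; simp only [Matrix.mul_assoc, Matrix.one_mul]
  have h2 : ∀ P : Matrix (Fin 3) (Fin 3) R, (gᵀ * P * g).trace = P.trace := by
    intro P
    rw [Matrix.mul_assoc, Matrix.trace_mul_comm, Matrix.mul_assoc, hg', Matrix.mul_one]
  have h3 : (gᵀ * S * g).det = S.det := by
    have := congrArg Matrix.det hg
    rw [Matrix.det_mul, Matrix.det_one] at this
    rw [Matrix.det_mul, Matrix.det_mul, mul_right_comm, this, one_mul]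
  simp only [trG, h1, h2, h3]

lemma gG_tr {R : Type*} [CommRing R] (M : Matrix (Fin 3) (Fin 3) R) :
    gG M 0 = trG (M + Mᵀ) (M - Mᵀ) 0 ∧
    2 * gG M 1 = trG (M + Mᵀ) (M - Mᵀ) 0 ^ 2 - trG (M + Mᵀ) (M - Mᵀ) 1 ∧
    gG M 2 = trG (M + Mᵀ) (M - Mᵀ) 2 ∧
    2 * gG M 3 = - trG (M + Mᵀ) (M - Mᵀ) 3 ∧
    2 * gG M 4 = 2 * trG (M + Mᵀ) (M - Mᵀ) 4 - trG (M + Mᵀ) (M - Mᵀ) 3 * trG (M + Mᵀ) (M - Mᵀ) 0 ∧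
    2 * gG M 5 = 2 * trG (M + Mᵀ) (M - Mᵀ) 5 - trG (M + Mᵀ) (M - Mᵀ) 3 * trG (M + Mᵀ) (M - Mᵀ) 1 ∧
    gG M 6 = trG (M + Mᵀ) (M - Mᵀ) 6 := by
  apply core_tr
  · ext i j; fin_cases i <;> fin_cases j <;> simp <;> ring
  · ext i j; fin_cases i <;> fin_cases j <;> simp

lemma gG_conj {R : Type*} [CommRing R] [IsDomain R] (h2 : (2 : R) ≠ 0)
    (g M : Matrix (Fin 3) (Fin 3) R) (hg : gᵀ * g = 1) : gG (gᵀ * M * g) = gG M := by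
  have e1 : gᵀ * M * g + (gᵀ * M * g)ᵀ = gᵀ * (M + Mᵀ) * g := by
    simp [Matrix.transpose_mul, Matrix.mul_add, Matrix.add_mul, Matrix.mul_assoc]
  have e2 : gᵀ * M * g - (gᵀ * M * g)ᵀ = gᵀ * (M - Mᵀ) * g := by
    simp [Matrix.transpose_mul, Matrix.mul_sub, Matrix.sub_mul, Matrix.mul_assoc]
  have H := gG_tr (gᵀ * M * g)
  rw [e1, e2, trG_conj _ _ _ hg] at H
  obtain ⟨a0, a1, a2, a3, a4, a5, a6⟩ := H
  obtain ⟨b0, b1, b2, b3, b4, b5, b6⟩ := gG_tr M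
  funext i
  fin_cases i
  · exact a0.trans b0.symm
  · exact mul_left_cancel₀ h2 (a1.trans b1.symm)
  · exact a2.trans b2.symm
  · exact mul_left_cancel₀ h2 (a3.trans b3.symm)
  · exact mul_left_cancel₀ h2 (a4.trans b4.symm)
  · exact mul_left_cancel₀ h2 (a5.trans b5.symm)
  · exact a6.trans b6.symm

lemma gG_transpose {R : Type*} [CommRing R] (M : Matrix (Fin 3) (Fin 3) R) :
    (∀ i : Fin 6, gG Mᵀ i.castSucc = gG M i.castSucc) ∧ gG Mᵀ 6 = - gG M 6 := by
  constructor
  · intro i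
    fin_cases i <;> simp [gG, coreG] <;> ring
  · simp [gG, coreG, Matrix.det_fin_three]; ring

/-- Gram determinant as polynomial in the first six invariants. -/
def gD {R : Type*} [CommRing R] (y : Fin 6 → R) : R :=
  let q3 := y 0 * y 5 - y 1 * y 4 + y 2 * y 3
  let q4 := y 0 * q3 - y 1 * y 5 + y 2 * y 4
  y 3 * (y 5 * q4 - q3 ^ 2) - y 4 * (y 4 * q4 - q3 * y 5) + y 5 * (y 4 * q3 - y 5 ^ 2)

lemma core_sq {R : Type*} [CommRing R] (a b c d e f x y z : R) :
    coreG a b c d e f x y z 6 ^ 2 = gD (fun i => coreG a b c d e f x y z i.castSucc) := by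
  obtain ⟨u0, hu0⟩ : ∃ u, u = a*x+d*y+e*z := ⟨_, rfl⟩
  obtain ⟨u1, hu1⟩ : ∃ u, u = d*x+b*y+f*z := ⟨_, rfl⟩
  obtain ⟨u2, hu2⟩ : ∃ u, u = e*x+f*y+c*z := ⟨_, rfl⟩
  obtain ⟨w0, hw0⟩ : ∃ u, u = a*u0+d*u1+e*u2 := ⟨_, rfl⟩
  obtain ⟨w1, hw1⟩ : ∃ u, u = d*u0+b*u1+f*u2 := ⟨_, rfl⟩
  obtain ⟨w2, hw2⟩ : ∃ u, u = e*u0+f*u1+c*u2 := ⟨_, rfl⟩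
  have k5 : x*w0+y*w1+z*w2 = u0^2+u1^2+u2^2 := by
    subst hw0 hw1 hw2 hu0 hu1 hu2; ring
  -- Cayley-Hamilton
  have q3 : (a+b+c)*(u0^2+u1^2+u2^2) - (a*b + a*c + b*c - d^2 - e^2 - f^2)*(x*u0+y*u1+z*u2)
      + (a*b*c + 2*d*e*f - a*f^2 - b*e^2 - c*d^2)*(x^2+y^2+z^2) = u0*w0+u1*w1+u2*w2 := by
    subst hw0 hw1 hw2 hu0 hu1 hu2; ring
  have q4 : (a+b+c)*(u0*w0+u1*w1+u2*w2) - (a*b + a*c + b*c - d^2 - e^2 - f^2)*(u0^2+u1^2+u2^2)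
      + (a*b*c + 2*d*e*f - a*f^2 - b*e^2 - c*d^2)*(x*u0+y*u1+z*u2) = w0*w0+w1*w1+w2*w2 := by
    subst hw0 hw1 hw2 hu0 hu1 hu2; ring
  have hD : gD (fun i => coreG a b c d e f x y z i.castSucc) =
      (x^2+y^2+z^2) * ((u0^2+u1^2+u2^2) * (w0*w0+w1*w1+w2*w2) - (u0*w0+u1*w1+u2*w2) ^ 2)
      - (x*u0+y*u1+z*u2) * ((x*u0+y*u1+z*u2) * (w0*w0+w1*w1+w2*w2)
        - (u0*w0+u1*w1+u2*w2) * (u0^2+u1^2+u2^2))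
      + (u0^2+u1^2+u2^2) * ((x*u0+y*u1+z*u2) * (u0*w0+u1*w1+u2*w2) - (u0^2+u1^2+u2^2) ^ 2) := by
    rw [← q4, ← q3]
    simp only [gD, coreG]
    simp [← hu0, ← hu1, ← hu2]
  rw [hD]
  have hd : coreG a b c d e f x y z 6 =
      x*(u1*w2-w1*u2) - u0*(y*w2-w1*z) + w0*(y*u2-u1*z) := by
    simp [coreG, Matrix.det_fin_three, ← hu0, ← hu1, ← hu2, ← hw0, ← hw1, ← hw2]
    ring
  rw [hd]
  clear q3 q4 hD hd
  clear hw0 hw1 hw2 hu0 hu1 hu2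
  have key : (x*(u1*w2-w1*u2) - u0*(y*w2-w1*z) + w0*(y*u2-u1*z))^2 =
      (x^2+y^2+z^2) * ((u0^2+u1^2+u2^2) * (w0*w0+w1*w1+w2*w2) - (u0*w0+u1*w1+u2*w2) ^ 2)
      - (x*u0+y*u1+z*u2) * ((x*u0+y*u1+z*u2) * (w0*w0+w1*w1+w2*w2)
        - (u0*w0+u1*w1+u2*w2) * (x*w0+y*w1+z*w2))
      + (x*w0+y*w1+z*w2) * ((x*u0+y*u1+z*u2) * (u0*w0+u1*w1+u2*w2)
        - (u0^2+u1^2+u2^2) * (x*w0+y*w1+z*w2)) := by ring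
  rw [key, k5]; ring

lemma gG_sq {R : Type*} [CommRing R] (M : Matrix (Fin 3) (Fin 3) R) :
    gG M 6 ^ 2 = gD (fun i => gG M i.castSucc) := core_sq _ _ _ _ _ _ _ _ _

end Aux1

section Aux2

lemma zero_of_aeval {F K σ : Type*} [Field F] [Field K] [Algebra F K] [Infinite K]
    (P : MvPolynomial σ F) (h : ∀ x : σ → K, aeval x P = 0) : P = 0 := by
  have : map (algebraMap F K) P = 0 := by
    apply MvPolynomial.funext
    intro x
    rw [eval_map, ← aeval_def, h, map_zero]
  exact map_injective _ (algebraMap F K).injective (by rw [this, map_zero])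

lemma aeval_scale {F A σ : Type*} [Field F] [CommRing A] [Algebra F A]
    {P : MvPolynomial σ F} {n : ℕ} (hP : P.IsHomogeneous n) (c : A) (x : σ → A) :
    aeval (fun i => c * x i) P = c ^ n * aeval x P := by
  rw [aeval_def, aeval_def, eval₂_eq, eval₂_eq, Finset.mul_sum]
  refine Finset.sum_congr rfl fun d hd => ?_
  have : d.degree = n := by
    by_contra hne
    exact (mem_support_iff.mp hd) (hP.coeff_eq_zero hne)
  rw [← this, Finsupp.degree_apply, ← Finset.prod_pow_eq_pow_sum]
  simp only [mul_pow, Finset.prod_mul_distrib]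
  ring

/-- evaluation of a polynomial at a matrix -/
noncomputable def evM {F : Type} [Field F] {A : Type*} [CommRing A] [Algebra F A]
    (M : Matrix (Fin 3) (Fin 3) A) : Rpoly F 1 →ₐ[F] A := aeval fun p => M p.1 p.2.1

/-- the basic invariants as polynomials -/
noncomputable def gP (F : Type) [Field F] (i : Fin 7) : Rpoly F 1 := gG (genMat F 1 0) i

variable {F : Type} [Field F]

lemma evM_comp {A B : Type*} [CommRing A] [Algebra F A] [CommRing B] [Algebra F B]
    (φ : A →ₐ[F] B) (M : Matrix (Fin 3) (Fin 3) A) (f : Rpoly F 1) :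
    φ (evM M f) = evM (M.map φ) f := by
  have : φ.comp (evM (F := F) M) = evM (M.map φ) := by
    apply MvPolynomial.algHom_ext
    intro i
    simp [evM]
  exact DFunLike.congr_fun this f

lemma evM_gP {A : Type*} [CommRing A] [Algebra F A] (M : Matrix (Fin 3) (Fin 3) A) (i : Fin 7) :
    evM M (gP F i) = gG M i := by
  have h := gG_map (evM (F := F) M : Rpoly F 1 →+* A) (genMat F 1 0) i
  have e : (genMat F 1 0).map (evM (F := F) M : Rpoly F 1 →+* A) = M := by
    ext i j; simp [evM, genMat]
  rw [e] at h
  exact h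

lemma actHom_eq (g : Matrix (Fin 3) (Fin 3) F) (f : Rpoly F 1) :
    actHom F 1 g f = evM ((g.map (algebraMap F (Rpoly F 1)))ᵀ * genMat F 1 0 *
      g.map (algebraMap F (Rpoly F 1))) f := by
  have : actHom F 1 g = evM ((g.map (algebraMap F (Rpoly F 1)))ᵀ * genMat F 1 0 *
      g.map (algebraMap F (Rpoly F 1))) := by
    apply MvPolynomial.algHom_ext
    rintro ⟨i, j, k⟩
    obtain rfl : k = 0 := Subsingleton.elim _ _
    simp [evM, actHom]
  rw [this]

lemma evM_act {A : Type*} [CommRing A] [Algebra F A] (M : Matrix (Fin 3) (Fin 3) A)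
    (g : Matrix (Fin 3) (Fin 3) F) (f : Rpoly F 1) :
    evM M (actHom F 1 g f) =
      evM ((g.map (algebraMap F A))ᵀ * M * g.map (algebraMap F A)) f := by
  rw [actHom_eq, evM_comp]
  congr 2
  ext i j
  simp [Matrix.mul_apply, Fin.sum_univ_three, evM, genMat]

lemma two_ne (h2 : ringChar F ≠ 2) : (2 : F) ≠ 0 := Ring.two_ne_zero h2

lemma gP_mem (h2 : ringChar F ≠ 2) (i : Fin 7) : gP F i ∈ invAlg F 1 := by
  intro g hg
  rw [actHom_eq, evM_gP]
  rw [gG_conj]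
  · rfl
  · have := two_ne h2
    intro h
    apply this
    have h' : (C (2 : F) : Rpoly F 1) = C 0 := by rw [map_ofNat C 2, h, map_zero]
    exact C_injective _ _ h'
  · rw [← Matrix.transpose_map, ← Matrix.map_mul, hg]
    exact Matrix.map_one _ (map_zero _) (map_one _)

lemma gP_hom (i : Fin 7) : (gP F i).IsHomogeneous (![1,2,3,2,3,4,6] i) := by
  have hX : ∀ i j, IsHomogeneous (genMat F 1 0 i j) 1 := fun i j => isHomogeneous_X _ _
  have ha : ∀ i j k l, IsHomogeneous (genMat F 1 0 i j + genMat F 1 0 k l) 1 :=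
    fun i j k l => (hX i j).add (hX k l)
  have hs : ∀ i j k l, IsHomogeneous (genMat F 1 0 i j - genMat F 1 0 k l) 1 :=
    fun i j k l => (hX i j).sub (hX k l)
  unfold gP gG
  have key : ∀ a b c d e f x y z : Rpoly F 1, IsHomogeneous a 1 → IsHomogeneous b 1 →
    IsHomogeneous c 1 → IsHomogeneous d 1 → IsHomogeneous e 1 → IsHomogeneous f 1 →
    IsHomogeneous x 1 → IsHomogeneous y 1 → IsHomogeneous z 1 →
    (coreG a b c d e f x y z i).IsHomogeneous (![1,2,3,2,3,4,6] i) := by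
    intro a b c d e f x y z ha hb hc hd he hf hx hy hz
    have h2 : IsHomogeneous (2 : Rpoly F 1) 0 := by
      have := isHomogeneous_C (Fin 3 × Fin 3 × Fin 1) (2 : F)
      rwa [map_ofNat C 2] at this
    have u0 : IsHomogeneous (a*x+d*y+e*z) 2 := ((ha.mul hx).add (hd.mul hy)).add (he.mul hz)
    have u1 : IsHomogeneous (d*x+b*y+f*z) 2 := ((hd.mul hx).add (hb.mul hy)).add (hf.mul hz)
    have u2 : IsHomogeneous (e*x+f*y+c*z) 2 := ((he.mul hx).add (hf.mul hy)).add (hc.mul hz)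
    have w0 := ((ha.mul u0).add (hd.mul u1)).add (he.mul u2)
    have w1 := ((hd.mul u0).add (hb.mul u1)).add (hf.mul u2)
    have w2 := ((he.mul u0).add (hf.mul u1)).add (hc.mul u2)
    fin_cases i
    · exact (ha.add hb).add hc
    · exact (((((ha.mul hb).add (ha.mul hc)).add (hb.mul hc)).sub (hd.pow 2)).sub
        (he.pow 2)).sub (hf.pow 2)
    · have := (((((ha.mul hb).mul hc).add (((h2.mul hd).mul he).mul hf)).sub
        (ha.mul (hf.pow 2))).sub (hb.mul (he.pow 2))).sub (hc.mul (hd.pow 2))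
      exact this
    · exact ((hx.pow 2).add (hy.pow 2)).add (hz.pow 2)
    · exact ((hx.mul u0).add (hy.mul u1)).add (hz.mul u2)
    · exact ((u0.pow 2).add (u1.pow 2)).add (u2.pow 2)
    · have := ((((((hx.mul u1).mul w2).sub ((hx.mul w1).mul u2)).sub ((u0.mul hy).mul w2)).add
        ((u0.mul w1).mul hz)).add ((w0.mul hy).mul u2)).sub ((w0.mul u1).mul hz)
      simp only [coreG]
      simp only [Matrix.det_fin_three]
      exact this
  apply key <;> first | exact ha _ _ _ _ | exact hs _ _ _ _

/-- invariance under all reflections over `K` -/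
def RI (K : Type) [Field K] [Algebra F K] (f : Rpoly F 1) : Prop :=
  ∀ (w : Fin 3 → K) (M : Matrix (Fin 3) (Fin 3) K), w ⬝ᵥ w ≠ 0 →
    evM ((1 - (2 / (w ⬝ᵥ w)) • vecMulVec w w) * M * (1 - (2 / (w ⬝ᵥ w)) • vecMulVec w w)) f
      = evM M f

lemma refl_orth {K : Type} [Field K] (w : Fin 3 → K) (hw : w ⬝ᵥ w ≠ 0) :
    (1 - (2 / (w ⬝ᵥ w)) • vecMulVec w w)ᵀ = (1 - (2 / (w ⬝ᵥ w)) • vecMulVec w w) ∧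
    (1 - (2 / (w ⬝ᵥ w)) • vecMulVec w w) * (1 - (2 / (w ⬝ᵥ w)) • vecMulVec w w) = 1 := by
  constructor
  · ext i j
    simp [Matrix.one_apply, vecMulVec_apply, mul_comm, eq_comm]
  · rw [Matrix.mul_sub, Matrix.sub_mul, Matrix.sub_mul, smul_mul_smul_comm,
      vecMulVec_mul_vecMulVec]
    ext i j
    simp [vecMulVec_apply]
    field_simp
    ring

/-- auxiliary polynomial ring -/
abbrev QQ (F : Type) [Field F] := MvPolynomial (Fin 3 ⊕ (Fin 3 × Fin 3)) F

lemma RI_of_inv (K : Type) [Field K] [Algebra F K] [Infinite F] {f : Rpoly F 1} {n : ℕ}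
    (hf : f ∈ invAlg F 1) (hn : f.IsHomogeneous n) : RI K f := by
  let w : Fin 3 → QQ F := fun i => X (Sum.inl i)
  let M : Matrix (Fin 3) (Fin 3) (QQ F) := Matrix.of fun i j => X (Sum.inr (i, j))
  let s : QQ F := w ⬝ᵥ w
  let H : Matrix (Fin 3) (Fin 3) (QQ F) := s • 1 - (2 : QQ F) • vecMulVec w w
  have hsc : ∀ {A : Type} [CommRing A] [Algebra F A] (c : A) (N : Matrix (Fin 3) (Fin 3) A),
      evM (c • N) f = c ^ n * evM N f := by
    intro A _ _ c N
    exact aeval_scale hn c _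
  -- specialization
  have spec : ∀ {L : Type} [Field L] [Algebra F L] (x : Fin 3 → L) (N : Matrix (Fin 3) (Fin 3) L),
      x ⬝ᵥ x ≠ 0 → ∀ φ : QQ F →ₐ[F] L, φ = aeval (Sum.elim x fun p => N p.1 p.2) →
      φ s = x ⬝ᵥ x ∧
      φ (evM (H * M * H) f - s ^ (2 * n) * evM M f) = (x ⬝ᵥ x) ^ (2 * n) *
        (evM ((1 - (2 / (x ⬝ᵥ x)) • vecMulVec x x) * N * (1 - (2 / (x ⬝ᵥ x)) • vecMulVec x x)) f
          - evM N f) := by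
    intro L _ _ x N hx φ hφ
    have h1 : φ s = x ⬝ᵥ x := by
      subst hφ
      simp [s, w, dotProduct]
    refine ⟨h1, ?_⟩
    rw [map_sub, map_mul, map_pow, evM_comp, evM_comp, h1]
    have hM : M.map φ = N := by
      subst hφ; ext i j; simp [M]
    have hH : H.map φ = (x ⬝ᵥ x) • (1 - (2 / (x ⬝ᵥ x)) • vecMulVec x x) := by
      ext i j
      have : φ (H i j) = φ s * (1 : Matrix (Fin 3) (Fin 3) L) i j - 2 * (x i * x j) := by
        have hwi : ∀ i, φ (w i) = x i := by intro i; subst hφ; simp [w]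
        simp [H, vecMulVec_apply, hwi, Matrix.one_apply, apply_ite φ, map_ofNat φ 2]
      rw [Matrix.map_apply, this, h1]
      simp [vecMulVec_apply]
      field_simp
    have hHM : (H * M * H).map φ = (x ⬝ᵥ x) ^ 2 •
        ((1 - (2 / (x ⬝ᵥ x)) • vecMulVec x x) * N * (1 - (2 / (x ⬝ᵥ x)) • vecMulVec x x)) := by
      rw [Matrix.map_mul, Matrix.map_mul, hM, hH]
      simp only [Matrix.smul_mul, Matrix.mul_smul, smul_smul, pow_two]
    rw [hHM, hM, hsc]
    ring
  have hs0 : s ≠ 0 := by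
    intro h
    have := congrArg (aeval (Sum.elim (![1,0,0] : Fin 3 → F) fun _ => (0:F))) h
    simp [s, w, dotProduct, Fin.sum_univ_three] at this
  have hG : evM (H * M * H) f - s ^ (2 * n) * evM M f = 0 := by
    have : (evM (H * M * H) f - s ^ (2 * n) * evM M f) * s = 0 := by
      apply zero_of_aeval (K := F)
      intro y
      let x : Fin 3 → F := fun i => y (Sum.inl i)
      let N : Matrix (Fin 3) (Fin 3) F := Matrix.of fun i j => y (Sum.inr (i, j))
      have hy : y = Sum.elim x fun p => N p.1 p.2 := by
        funext i; cases i <;> simp [x, N]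
      rw [hy, map_mul]
      by_cases hx : x ⬝ᵥ x = 0
      · have : (aeval (Sum.elim x fun p => N p.1 p.2)) s = x ⬝ᵥ x := by
          simp [s, w, dotProduct]
        rw [this, hx, mul_zero]
      · rw [(spec x N hx _ rfl).2]
        obtain ⟨ht, ho⟩ := refl_orth x hx
        have h := hf (1 - (2 / (x ⬝ᵥ x)) • vecMulVec x x) (by rw [ht, ho])
        have h' := congrArg (evM N) h
        rw [evM_act] at h'
        have e : ∀ g : Matrix (Fin 3) (Fin 3) F, g.map (algebraMap F F) = g := by
          intro g; ext; simp
        rw [e, ht] at h'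
        rw [h', sub_self, mul_zero, zero_mul]
    exact (mul_eq_zero.mp this).resolve_right hs0
  intro x N hx
  have := (spec x N hx _ rfl).2
  rw [hG, map_zero] at this
  exact sub_eq_zero.mp ((mul_eq_zero.mp this.symm).resolve_left (pow_ne_zero _ hx))

end Aux2

section Aux3

lemma exists_root_ne {K : Type} [Field K] [IsAlgClosed K] (h2 : (2 : K) ≠ 0) (x y : K)
    (hx : x ≠ 0) : ∃ c, c * c = x ∧ c ≠ 0 ∧ c ≠ y := by
  obtain ⟨c, hc⟩ := IsAlgClosed.exists_eq_mul_self x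
  have hc0 : c ≠ 0 := by rintro rfl; simp at hc; exact hx hc
  by_cases h : c = y
  · refine ⟨-c, by rw [hc]; ring, neg_ne_zero.mpr hc0, ?_⟩
    intro h'
    have : 2 * c = 0 := by rw [← h] at h'; linear_combination - h'
    rcases mul_eq_zero.mp this with h | h
    · exact h2 h
    · exact hc0 h
  · exact ⟨c, hc.symm, hc0, h⟩

lemma slice_step1 {F K : Type} [Field F] [Field K] [Algebra F K] [IsAlgClosed K]
    (h2 : (2 : K) ≠ 0) (M : Matrix (Fin 3) (Fin 3) K) (h0 : gG M 3 ≠ 0) :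
    ∃ N : Matrix (Fin 3) (Fin 3) K, gG N = gG M ∧ N 0 2 = N 2 0 ∧ N 1 2 = N 2 1 ∧
      ∀ f : Rpoly F 1, RI K f → evM M f = evM N f := by
  let v : Fin 3 → K := ![M 2 1 - M 1 2, M 0 2 - M 2 0, M 1 0 - M 0 1]
  have hv : gG M 3 = v 0 ^ 2 + v 1 ^ 2 + v 2 ^ 2 := by simp [gG, coreG, v]
  obtain ⟨c, hc, hc0, hcv⟩ := exists_root_ne h2 (gG M 3) (v 2) h0
  let w : Fin 3 → K := ![v 0, v 1, v 2 - c]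
  have hww : w ⬝ᵥ w = 2 * c * (c - v 2) := by
    rw [hv] at hc
    simp [w, dotProduct, Fin.sum_univ_three]
    linear_combination -hc
  have hd : c - v 2 ≠ 0 := sub_ne_zero.mpr hcv
  have hw0 : w ⬝ᵥ w ≠ 0 := by
    rw [hww]; exact mul_ne_zero (mul_ne_zero h2 hc0) hd
  obtain ⟨ht, ho⟩ := refl_orth w hw0
  have hRI : ∀ f : Rpoly F 1, RI K f → _ := fun f hf => hf w M hw0
  have hcol : ∀ i, (1 - (2 / (w ⬝ᵥ w)) • vecMulVec w w) i 2 = v i / c := by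
    intro i
    rw [hww]
    fin_cases i <;> simp [vecMulVec_apply, w] <;> field_simp <;> ring
  generalize (1 - (2 / (w ⬝ᵥ w)) • vecMulVec w w) = R at *
  refine ⟨R * M * R, ?_, ?_, ?_, fun f hf => (hRI f hf).symm⟩
  · have := gG_conj h2 R M (by rw [ht, ho])
    rwa [ht] at this
  all_goals
    have hA : ∀ i, (R * M * R - (R * M * R)ᵀ) i 2 = 0 := by
      intro i
      have e : R * M * R - (R * M * R)ᵀ = R * ((M - Mᵀ) * R) := by
        rw [Matrix.transpose_mul, Matrix.transpose_mul, ht, Matrix.sub_mul, Matrix.mul_sub,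
          Matrix.mul_assoc]
      have e2 : ∀ k, ((M - Mᵀ) * R) k 2 = 0 := by
        intro k
        rw [Matrix.mul_apply, Fin.sum_univ_three, hcol, hcol, hcol]
        fin_cases k <;> simp [v] <;> ring
      rw [e, Matrix.mul_apply]
      simp [e2]
  · exact sub_eq_zero.mp (hA 0)
  · exact sub_eq_zero.mp (hA 1)

lemma slice_step2 {F K : Type} [Field F] [Field K] [Algebra F K] [IsAlgClosed K]
    (h2 : (2 : K) ≠ 0) (M : Matrix (Fin 3) (Fin 3) K) (hM0 : M 0 2 = M 2 0) (hM1 : M 1 2 = M 2 1)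
    (h0 : gG M 3 * gG M 5 - gG M 4 ^ 2 ≠ 0) :
    ∃ N : Matrix (Fin 3) (Fin 3) K, N 0 2 = 0 ∧ N 2 0 = 0 ∧ N 1 2 = N 2 1 ∧
      ∀ f : Rpoly F 1, RI K f → evM M f = evM N f := by
  have hu : M 2 0 ^ 2 + M 2 1 ^ 2 ≠ 0 := by
    intro h
    apply h0
    have : gG M 3 * gG M 5 - gG M 4 ^ 2 =
      4 * (M 1 0 - M 0 1) ^ 4 * (M 2 0 ^ 2 + M 2 1 ^ 2) := by
      simp [gG, coreG, hM0, hM1]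
      ring
    rw [this, h, mul_zero]
  obtain ⟨b, hb, hb0, hbv⟩ := exists_root_ne h2 _ (M 2 1) hu
  let w : Fin 3 → K := ![M 2 0, M 2 1 - b, 0]
  have hww : w ⬝ᵥ w = 2 * b * (b - M 2 1) := by
    simp [w, dotProduct, Fin.sum_univ_three]
    linear_combination -hb
  have hd : b - M 2 1 ≠ 0 := sub_ne_zero.mpr hbv
  have hw0 : w ⬝ᵥ w ≠ 0 := by
    rw [hww]; exact mul_ne_zero (mul_ne_zero h2 hb0) hd
  have hbq : M 2 0 ^ 2 = b * b - M 2 1 ^ 2 := by rw [hb]; ring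
  have key : ∀ s, s = 2 / (w ⬝ᵥ w) → s * (b * (b - M 2 1)) = 1 := by
    intro s hs
    rw [hs, hww]; field_simp
  refine ⟨_, ?_, ?_, ?_, fun f hf => (hf w M hw0).symm⟩
  all_goals
    generalize hs : 2 / (w ⬝ᵥ w) = s
    have hk := key s hs.symm
    simp [Matrix.mul_apply, Fin.sum_univ_three, vecMulVec_apply, w, hM0, hM1]
  · linear_combination (-M 2 0) * hk + (-s * M 2 0) * hbq
  · linear_combination (-M 2 0) * hk + (-s * M 2 0) * hbq
  · ring

lemma to_slice {F K : Type} [Field F] [Field K] [Algebra F K] [IsAlgClosed K]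
    (h2 : (2 : K) ≠ 0) (M : Matrix (Fin 3) (Fin 3) K) (h0 : gG M 3 ≠ 0)
    (h1 : gG M 3 * gG M 5 - gG M 4 ^ 2 ≠ 0) :
    ∃ N : Matrix (Fin 3) (Fin 3) K, N 0 2 = 0 ∧ N 2 0 = 0 ∧ N 1 2 = N 2 1 ∧
      ∀ f : Rpoly F 1, RI K f → evM M f = evM N f := by
  obtain ⟨M1, hg, a, b, hM1⟩ := slice_step1 (F := F) h2 M h0
  obtain ⟨N, c, d, e, hN⟩ := slice_step2 (F := F) h2 M1 a b (by rwa [hg])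
  exact ⟨N, c, d, e, fun f hf => (hM1 f hf).trans (hN f hf)⟩

end Aux3

section Aux4

/-- slice matrix, scaled by `h` -/
def slMat {A : Type*} [CommRing A] (h p t w b r c : A) : Matrix (Fin 3) (Fin 3) A :=
  Matrix.of ![![h * p, h * (r + c), 0], ![h * (r - c), h * t, h * b], ![0, h * b, h * w]]

lemma gG_slMat {A : Type*} [CommRing A] (h p t w b r c : A) (hh : 2 * h = 1) :
    gG (slMat h p t w b r c) = coreG p t w r 0 b 0 0 (-c) := by
  have e : ∀ x : A, h * x + h * x = x := fun x => by linear_combination x * hh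
  have e1 : h * (r + c) + h * (r - c) = r := by linear_combination r * hh
  have e2 : h * (r - c) - h * (r + c) = -c := by linear_combination -c * hh
  simp [gG, slMat, e, e1, e2]

lemma core_sl {A : Type*} [CommRing A] (p t w b r c : A) :
    coreG p t w r 0 b 0 0 (-c) =
     ![p + t + w, p*t + p*w + t*w - r^2 - b^2, p*t*w - p*b^2 - w*r^2, c^2, c^2*w,
       c^2*(b^2+w^2), r*c*(b^2*c^2)] := by
  funext i
  fin_cases i <;> simp [coreG, Matrix.det_fin_three] <;> ring

variable {F : Type} [Field F]

/-- evaluation of polynomials in the seven basic invariants on the slice -/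
noncomputable def evS (F : Type) [Field F] : MvPolynomial (Fin 7) F →ₐ[F] MvPolynomial (Fin 6) F :=
  aeval (coreG (X 0) (X 1) (X 2) (X 4) 0 (X 3) 0 0 (-X 5))

lemma evS_X (i : Fin 7) : evS F (X i) = (![X 0 + X 1 + X 2,
    X 0*X 1 + X 0*X 2 + X 1*X 2 - X 4^2 - X 3^2, X 0*X 1*X 2 - X 0*X 3^2 - X 2*X 4^2, X 5^2,
    X 5^2*X 2, X 5^2*(X 3^2+X 2^2), X 4*X 5*(X 3^2*X 5^2)] : Fin 7 → MvPolynomial (Fin 6) F) i := by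
  rw [evS, aeval_X, core_sl]

/-- the denominator -/
noncomputable def dT (F : Type) [Field F] : MvPolynomial (Fin 7) F := X 3 * (X 3 * X 5 - X 4 ^ 2)

lemma evS_dT : evS F (dT F) = X 5 ^ 2 * (X 5 ^ 4 * X 3 ^ 2) := by
  simp only [dT, map_mul, map_sub, map_pow, evS_X]
  simp
  ring

/-- functions on the slice that are invariant fractions -/
noncomputable def subL (F : Type) [Field F] : Subalgebra F (MvPolynomial (Fin 6) F) where
  carrier := {φ | ∃ N Q, φ * evS F (dT F) ^ N = evS F Q}
  mul_mem' := by
    rintro a b ⟨N, Q, h⟩ ⟨N', Q', h'⟩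
    exact ⟨N + N', Q * Q', by rw [map_mul, ← h, ← h']; ring⟩
  add_mem' := by
    rintro a b ⟨N, Q, h⟩ ⟨N', Q', h'⟩
    exact ⟨N + N', Q * dT F ^ N' + Q' * dT F ^ N, by
      rw [map_add, map_mul, map_mul, ← h, ← h', map_pow, map_pow]; ring⟩
  algebraMap_mem' := by
    intro r
    exact ⟨0, C r, by simp [evS, MvPolynomial.algebraMap_eq]⟩

lemma subL_ev (Q : MvPolynomial (Fin 7) F) : evS F Q ∈ subL F := ⟨0, Q, by simp⟩

lemma subL_sat {φ : MvPolynomial (Fin 6) F} (h : φ * evS F (dT F) ∈ subL F) : φ ∈ subL F := by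
  obtain ⟨N, Q, h⟩ := h
  exact ⟨N + 1, Q, by rw [← h]; ring⟩

lemma subL_sat1 {φ : MvPolynomial (Fin 6) F} (h : φ * X 5 ^ 2 ∈ subL F) : φ ∈ subL F := by
  apply subL_sat
  have h1 := subL_ev (F := F) (X 3 * X 5 - X 4 ^ 2)
  have : φ * evS F (dT F) = (φ * X 5 ^ 2) * evS F (X 3 * X 5 - X 4 ^ 2) := by
    rw [dT, map_mul, evS_X]; simp; ring
  rw [this]
  exact mul_mem h h1

lemma subL_sat2 {φ : MvPolynomial (Fin 6) F} (h : φ * (X 5 ^ 4 * X 3 ^ 2) ∈ subL F) :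
    φ ∈ subL F := by
  apply subL_sat
  have h1 := subL_ev (F := F) (X 3)
  have : φ * evS F (dT F) = (φ * (X 5 ^ 4 * X 3 ^ 2)) * evS F (X 3) := by
    rw [evS_dT, evS_X]; simp; ring
  rw [this]
  exact mul_mem h h1

lemma subL_c : (X 5 ^ 2 : MvPolynomial (Fin 6) F) ∈ subL F := by
  have := subL_ev (F := F) (X 3); rw [evS_X] at this; exact this

lemma subL_w : (X 2 : MvPolynomial (Fin 6) F) ∈ subL F := by
  apply subL_sat1
  have := subL_ev (F := F) (X 4); rw [evS_X, mul_comm] at *; exact this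

lemma subL_b : (X 3 ^ 2 : MvPolynomial (Fin 6) F) ∈ subL F := by
  apply subL_sat1
  have := subL_ev (F := F) (X 5); rw [evS_X] at this
  have h : (X 3 ^ 2 * X 5 ^ 2 : MvPolynomial (Fin 6) F) =
      X 5^2*(X 3^2+X 2^2) - X 5 ^ 2 * X 2 ^ 2 := by ring
  rw [h]
  exact sub_mem this (mul_mem subL_c (pow_mem subL_w 2))

lemma subL_p : (X 0 : MvPolynomial (Fin 6) F) ∈ subL F := by
  apply subL_sat2
  have h0 := subL_ev (F := F) (X 0); rw [evS_X] at h0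
  have h1 := subL_ev (F := F) (X 1); rw [evS_X] at h1
  have h2 := subL_ev (F := F) (X 2); rw [evS_X] at h2
  have hw := subL_w (F := F)
  have h : (X 0 * (X 5 ^ 4 * X 3 ^ 2) : MvPolynomial (Fin 6) F) =
      (X 5 ^ 2) ^ 2 * (X 2 * (X 0*X 1 + X 0*X 2 + X 1*X 2 - X 4^2 - X 3^2)
        - X 2 ^ 2 * ((X 0 + X 1 + X 2) - X 2) + X 2 * X 3 ^ 2
        - (X 0*X 1*X 2 - X 0*X 3^2 - X 2*X 4^2)) := by ring
  rw [h]
  exact mul_mem (pow_mem subL_c 2) (sub_mem (add_mem (sub_mem (mul_mem hw h1)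
    (mul_mem (pow_mem hw 2) (sub_mem h0 hw))) (mul_mem hw subL_b)) h2)

lemma subL_t : (X 1 : MvPolynomial (Fin 6) F) ∈ subL F := by
  have h0 := subL_ev (F := F) (X 0); rw [evS_X] at h0
  have h : (X 1 : MvPolynomial (Fin 6) F) = (X 0 + X 1 + X 2) - X 0 - X 2 := by ring
  rw [h]
  exact sub_mem (sub_mem h0 subL_p) subL_w

lemma subL_r : (X 4 ^ 2 : MvPolynomial (Fin 6) F) ∈ subL F := by
  have h1 := subL_ev (F := F) (X 1); rw [evS_X] at h1
  have h : (X 4 ^ 2 : MvPolynomial (Fin 6) F) = X 0*X 1 + X 0*X 2 + X 1*X 2 - X 3 ^ 2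
      - (X 0*X 1 + X 0*X 2 + X 1*X 2 - X 4^2 - X 3^2) := by ring
  rw [h]
  have hw := subL_w (F := F)
  have hp := subL_p (F := F)
  have ht := subL_t (F := F)
  exact sub_mem (sub_mem (add_mem (add_mem (mul_mem hp ht) (mul_mem hp hw)) (mul_mem ht hw))
    subL_b) h1

lemma subL_rc : (X 4 * X 5 : MvPolynomial (Fin 6) F) ∈ subL F := by
  apply subL_sat2
  have h6 := subL_ev (F := F) (X 6); rw [evS_X] at h6
  have h : (X 4 * X 5 * (X 5 ^ 4 * X 3 ^ 2) : MvPolynomial (Fin 6) F) =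
    (X 4*X 5*(X 3^2*X 5^2)) * X 5 ^ 2 := by ring
  rw [h]
  exact mul_mem h6 subL_c

lemma coeff_sgn {σ : Type*} [Fintype σ] (ε : σ → F) (φ : MvPolynomial σ F) (m : σ →₀ ℕ) :
    coeff m (aeval (fun i => C (ε i) * X i) φ : MvPolynomial σ F) =
      (∏ i, ε i ^ m i) * coeff m φ := by
  induction φ using MvPolynomial.induction_on' with
  | monomial u a =>
    have : (aeval (fun i => C (ε i) * X i) (monomial u a) : MvPolynomial σ F) =
        monomial u (a * ∏ i, ε i ^ u i) := by
      rw [aeval_monomial, MvPolynomial.algebraMap_eq, monomial_eq, Finsupp.prod_fintype,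
        Finsupp.prod_fintype]
      · simp only [mul_pow, Finset.prod_mul_distrib, map_mul, map_prod, map_pow]
        ring
      · simp
      · simp
    rw [this]
    classical
    rw [coeff_monomial, coeff_monomial]
    split_ifs with h
    · rw [h]; ring
    · simp
  | add p q hp hq => rw [map_add, coeff_add, hp, hq, coeff_add]; ring

lemma subL_of_even (h2 : (2 : F) ≠ 0) (φ : MvPolynomial (Fin 6) F)
    (s1 : aeval (fun i => C ((![1,1,1,-1,1,1] : Fin 6 → F) i) * X i) φ = φ)
    (s2 : aeval (fun i => C ((![1,1,1,1,-1,-1] : Fin 6 → F) i) * X i) φ = φ) : φ ∈ subL F := by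
  have hpar : ∀ k : ℕ, ∀ a : F, (-1) ^ k * a = a → a ≠ 0 → Even k := by
    intro k a h ha
    by_contra hk
    rw [Nat.not_even_iff_odd] at hk
    rw [hk.neg_one_pow] at h
    have : 2 * a = 0 := by linear_combination -h
    rcases mul_eq_zero.mp this with h | h
    · exact h2 h
    · exact ha h
  rw [φ.as_sum]
  refine sum_mem fun m hm => ?_
  rw [mem_support_iff] at hm
  have e1 := congrArg (coeff m) s1
  have e2 := congrArg (coeff m) s2
  rw [coeff_sgn] at e1 e2
  have o1 : Even (m 3) := hpar _ _ (by simpa [Fin.prod_univ_six] using e1) hm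
  have o2 : Even (m 4 + m 5) := hpar _ _ (by simpa [Fin.prod_univ_six, pow_add] using e2) hm
  rw [monomial_eq, Finsupp.prod_fintype _ _ (by simp), Fin.prod_univ_six]
  obtain ⟨k, hk⟩ := o1
  have h45 : (X 4 ^ m 4 * X 5 ^ m 5 : MvPolynomial (Fin 6) F) ∈ subL F := by
    rcases Nat.even_or_odd' (m 4) with ⟨l, hl | hl⟩ <;>
      rcases Nat.even_or_odd' (m 5) with ⟨j, hj | hj⟩
    · rw [hl, hj, pow_mul, pow_mul]
      exact mul_mem (pow_mem subL_r _) (pow_mem subL_c _)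
    · exfalso; rw [hl, hj, Nat.even_iff] at o2; omega
    · exfalso; rw [hl, hj, Nat.even_iff] at o2; omega
    · have : (X 4 ^ m 4 * X 5 ^ m 5 : MvPolynomial (Fin 6) F) =
        (X 4 ^ 2) ^ l * (X 5 ^ 2) ^ j * (X 4 * X 5) := by rw [hl, hj]; ring
      rw [this]
      exact mul_mem (mul_mem (pow_mem subL_r _) (pow_mem subL_c _)) subL_rc
  have h3 : (X 3 ^ m 3 : MvPolynomial (Fin 6) F) ∈ subL F := by
    rw [hk, ← two_mul, pow_mul]; exact pow_mem subL_b _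
  rw [mul_assoc _ (X 4 ^ m 4)]
  exact mul_mem ((subL F).algebraMap_mem _) (mul_mem (mul_mem (mul_mem (mul_mem
    (pow_mem subL_p _) (pow_mem subL_t _)) (pow_mem subL_w _)) h3) h45)

/-- On the slice, invariants are fractions. -/
lemma slice_frac (h2 : (2 : F) ≠ 0) (f : Rpoly F 1) (hf : f ∈ invAlg F 1) :
    evM (slMat (C (1/2)) (X 0) (X 1) (X 2) (X 3) (X 4) (X 5) : Matrix _ _ (MvPolynomial (Fin 6) F)) f
      ∈ subL F := by
  apply subL_of_even h2
  · have h := hf (Matrix.diagonal ![1,1,-1]) (by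
      ext i j; fin_cases i <;> fin_cases j <;> simp)
    conv_rhs => rw [← h]
    rw [evM_act, evM_comp]
    congr 2
    ext i j
    congr 1
    fin_cases i <;> fin_cases j <;> simp [slMat, Matrix.mul_apply, Fin.sum_univ_three, Matrix.diagonal]
  · have h := hf (Matrix.diagonal ![-1,1,1]) (by
      ext i j; fin_cases i <;> fin_cases j <;> simp)
    conv_rhs => rw [← h]
    rw [evM_act, evM_comp]
    congr 2
    ext i j
    congr 1
    fin_cases i <;> fin_cases j <;> simp [slMat, Matrix.mul_apply, Fin.sum_univ_three, Matrix.diagonal] <;> ring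

/-- Invariants are fractions. -/
lemma inv_frac (h2 : (2 : F) ≠ 0) [Infinite F] {f : Rpoly F 1} {n : ℕ} (hf : f ∈ invAlg F 1)
    (hn : f.IsHomogeneous n) :
    ∃ (N : ℕ) (Q : MvPolynomial (Fin 7) F), f * aeval (gP F) (dT F) ^ N = aeval (gP F) Q := by
  obtain ⟨N, Q, hQ⟩ := slice_frac h2 f hf
  refine ⟨N, Q, ?_⟩
  let K := AlgebraicClosure F
  have h2K : (2 : K) ≠ 0 := by
    intro h
    apply h2
    apply (algebraMap F K).injective
    rw [map_ofNat, h, map_zero]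
  have hchar : ringChar F ≠ 2 := by
    intro h
    apply h2
    have := ringChar.Nat.cast_ringChar (R := F)
    rw [h] at this; exact_mod_cast this
  have hev : ∀ (M : Matrix (Fin 3) (Fin 3) K) (P : MvPolynomial (Fin 7) F),
      evM M (aeval (gP F) P) = aeval (gG M) P := by
    intro M P
    have : (evM (F := F) M).comp (aeval (gP F)) = aeval (gG M) := by
      apply MvPolynomial.algHom_ext
      intro i; simp [evM_gP]
    exact DFunLike.congr_fun this P
  have hgRI : ∀ i, RI K (gP F i) := fun i => RI_of_inv K (gP_mem hchar i) (gP_hom i)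
  have hfRI : RI K f := RI_of_inv K hf hn
  have hinf : Infinite K := Infinite.of_injective _ (algebraMap F K).injective
  have key : (f * aeval (gP F) (dT F) ^ N - aeval (gP F) Q) * aeval (gP F) (dT F) = 0 := by
    apply zero_of_aeval (K := K)
    intro x
    let M : Matrix (Fin 3) (Fin 3) K := Matrix.of fun i j => x (i, j, 0)
    have hx : (aeval x : Rpoly F 1 →ₐ[F] K) = evM M := by
      apply MvPolynomial.algHom_ext
      rintro ⟨i, j, k⟩
      obtain rfl : k = 0 := Subsingleton.elim _ _
      simp [evM, M]
    rw [hx, map_mul, map_sub, map_mul, map_pow, hev, hev]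
    by_cases hd : aeval (gG M) (dT F) = 0
    · rw [hd, mul_zero]
    have hd' : gG M 3 * (gG M 3 * gG M 5 - gG M 4 ^ 2) ≠ 0 := by
      simpa [dT] using hd
    obtain ⟨Y, y1, y2, y3, hY⟩ := to_slice (F := F) h2K M (left_ne_zero_of_mul hd')
      (right_ne_zero_of_mul hd')
    have hgY : gG M = gG Y := by
      funext i
      have := hY _ (hgRI i)
      rwa [evM_gP, evM_gP] at this
    rw [hY f hfRI, hgY]
    let y : Fin 6 → K := ![2 * Y 0 0, 2 * Y 1 1, 2 * Y 2 2, 2 * Y 1 2, Y 0 1 + Y 1 0, Y 0 1 - Y 1 0]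
    have hYs : (slMat (C (1/2)) (X 0) (X 1) (X 2) (X 3) (X 4) (X 5) :
        Matrix _ _ (MvPolynomial (Fin 6) F)).map (aeval (R := F) y) = Y := by
      ext i j
      have hh : 2 * aeval y (C (1/2 : F)) = 1 := by
        rw [aeval_C, ← map_ofNat (algebraMap F K) 2, ← map_mul]
        simp [h2]
      generalize (C (1/2 : F) : MvPolynomial (Fin 6) F) = hf at hh
      generalize hh2 : aeval y hf = h at hh
      fin_cases i <;> fin_cases j <;> simp [slMat, y, y1, y2, hh2, ← y3]
      · linear_combination Y 0 0 * hh
      · linear_combination Y 0 1 * hh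
      · linear_combination Y 1 0 * hh
      · linear_combination Y 1 1 * hh
      · linear_combination Y 1 2 * hh
      · linear_combination Y 1 2 * hh
      · linear_combination Y 2 2 * hh
    have hgs : ∀ P, aeval y (evS F P) = aeval (gG Y) P := by
      intro P
      have : (aeval (R := F) y).comp (evS F) = aeval (gG Y) := by
        apply MvPolynomial.algHom_ext
        intro i
        rw [AlgHom.comp_apply, evS, aeval_X, aeval_X, ← hYs, ← gG_slMat (C (1/2))]
        · exact gG_map (aeval (R := F) y : MvPolynomial (Fin 6) F →+* K) _ i
        · rw [← map_ofNat C 2, ← C_mul]; simp [h2]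
      exact DFunLike.congr_fun this P
    have := congrArg (aeval (R := F) y) hQ
    rw [map_mul, map_pow, evM_comp, hYs, hgs, hgs] at this
    rw [this, sub_self, zero_mul]
  have hne : aeval (gP F) (dT F) ≠ 0 := by
    intro h
    have := congrArg (evM (slMat (C (1/2)) (X 0) (X 1) (X 2) (X 3) (X 4) (X 5) :
        Matrix _ _ (MvPolynomial (Fin 6) F))) h
    simp only [dT, map_mul, map_sub, map_pow, aeval_X, evM_gP, map_zero] at this
    rw [gG_slMat _ _ _ _ _ _ _ (by rw [← map_ofNat C 2, ← C_mul]; simp [h2]), core_sl] at this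
    have h' : (X 5 ^ 2 * (X 5 ^ 4 * X 3 ^ 2) : MvPolynomial (Fin 6) F) = 0 := by
      rw [← this]; simp; ring
    have h5 : (X 5 : MvPolynomial (Fin 6) F) ≠ 0 := X_ne_zero _
    have h3 : (X 3 : MvPolynomial (Fin 6) F) ≠ 0 := X_ne_zero _
    exact mul_ne_zero (pow_ne_zero 2 h5) (mul_ne_zero (pow_ne_zero 4 h5) (pow_ne_zero 2 h3)) h'
  exact sub_eq_zero.mp ((mul_eq_zero.mp key).resolve_right hne)

end Aux4

section Aux5

/-- discriminant of the cubic -/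
def gDisc {R : Type*} [CommRing R] (y : Fin 6 → R) : R :=
  y 0 ^ 2 * y 1 ^ 2 - 4 * y 1 ^ 3 - 4 * y 0 ^ 3 * y 2 + 18 * y 0 * y 1 * y 2 - 27 * y 2 ^ 2

lemma exists_roots {K : Type} [Field K] [IsAlgClosed K] (h2 : (2 : K) ≠ 0) (a b c : K) :
    ∃ s t u : K, s + t + u = a ∧ s * t + s * u + t * u = b ∧ s * t * u = c := by
  obtain ⟨s, hs⟩ := IsAlgClosed.exists_root
    (Polynomial.X ^ 3 + (Polynomial.C (-a) * Polynomial.X ^ 2 + Polynomial.C b * Polynomial.X +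
      Polynomial.C (-c)) : Polynomial K) (by
        have : (Polynomial.X ^ 3 + (Polynomial.C (-a) * Polynomial.X ^ 2
          + Polynomial.C b * Polynomial.X + Polynomial.C (-c)) : Polynomial K).degree = 3 := by
          compute_degree!
        rw [this]; decide)
  simp [Polynomial.IsRoot] at hs
  obtain ⟨d, hd⟩ := IsAlgClosed.exists_eq_mul_self ((a - s) ^ 2 - 4 * (b - s * (a - s)))
  refine ⟨s, ((a - s) + d) / 2, ((a - s) - d) / 2, ?_, ?_, ?_⟩
  · field_simp; ring
  · field_simp; linear_combination hd
  · field_simp; linear_combination s * hd + 4 * hs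

lemma exists_hit {K : Type} [Field K] [IsAlgClosed K] (h2 : (2 : K) ≠ 0) (y : Fin 6 → K)
    (hy : gDisc y ≠ 0) : ∃ M : Matrix (Fin 3) (Fin 3) K, ∀ i : Fin 6, gG M i.castSucc = y i := by
  obtain ⟨s, t, u, e0, e1, e2⟩ := exists_roots h2 (y 0) (y 1) (y 2)
  have hd : gDisc y = ((s - t) * (s - u) * (t - u)) ^ 2 := by
    simp only [gDisc, ← e0, ← e1, ← e2]; ring
  rw [hd] at hy
  have hy' := pow_ne_zero_iff (two_ne_zero) |>.mp hy
  have h1 : s - t ≠ 0 := left_ne_zero_of_mul (left_ne_zero_of_mul hy')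
  have h3 : s - u ≠ 0 := right_ne_zero_of_mul (left_ne_zero_of_mul hy')
  have h4 : t - u ≠ 0 := right_ne_zero_of_mul hy'
  obtain ⟨p, hp⟩ := IsAlgClosed.exists_eq_mul_self
    ((y 5 - (t + u) * y 4 + t * u * y 3) / ((s - t) * (s - u)))
  obtain ⟨q, hq⟩ := IsAlgClosed.exists_eq_mul_self
    (-(y 5 - (s + u) * y 4 + s * u * y 3) / ((s - t) * (t - u)))
  obtain ⟨r, hr⟩ := IsAlgClosed.exists_eq_mul_self
    ((y 5 - (s + t) * y 4 + s * t * y 3) / ((s - u) * (t - u)))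
  let M : Matrix (Fin 3) (Fin 3) K :=
    Matrix.of ![![s/2, -r/2, q/2], ![r/2, t/2, -p/2], ![-q/2, p/2, u/2]]
  have hM : gG M = coreG s t u 0 0 0 p q r := by
    have e : ∀ x : K, x / 2 + x / 2 = x := fun x => by field_simp; ring
    have e1 : ∀ x : K, x / 2 - -x / 2 = x := fun x => by field_simp; ring
    have e2 : ∀ x : K, x / 2 + -x / 2 = 0 := fun x => by field_simp; ring
    have e3 : ∀ x : K, -x / 2 + x / 2 = 0 := fun x => by field_simp; ring
    simp [gG, M, e, e1, e2, e3]
  refine ⟨M, ?_⟩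
  rw [hM]
  intro i
  fin_cases i
  · simp [coreG]; exact e0
  · simp [coreG]; exact e1
  · simp [coreG]; exact e2
  · simp [coreG]
    rw [pow_two, pow_two, pow_two, ← hp, ← hq, ← hr]
    field_simp; ring
  · simp [coreG]
    have : p * (s * p) + q * (t * q) + r * (u * r) = s * (p * p) + t * (q * q) + u * (r * r) := by
      ring
    rw [this, ← hp, ← hq, ← hr]
    field_simp; ring
  · simp [coreG]
    have : (s * p) ^ 2 + (t * q) ^ 2 + (u * r) ^ 2 =
      s ^ 2 * (p * p) + t ^ 2 * (q * q) + u ^ 2 * (r * r) := by ring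
    rw [this, ← hp, ← hq, ← hr]
    field_simp; ring

variable {F : Type} [Field F]

/-- polynomials in the first six invariants -/
noncomputable def gB (F : Type) [Field F] : MvPolynomial (Fin 6) F →ₐ[F] Rpoly F 1 :=
  aeval fun i : Fin 6 => gP F i.castSucc

lemma gB_evM {A : Type*} [CommRing A] [Algebra F A] (M : Matrix (Fin 3) (Fin 3) A)
    (P : MvPolynomial (Fin 6) F) :
    evM M (gB F P) = aeval (fun i : Fin 6 => gG M i.castSucc) P := by
  have : (evM (F := F) M).comp (gB F) = aeval (fun i : Fin 6 => gG M i.castSucc) := by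
    apply MvPolynomial.algHom_ext
    intro i; simp [gB, evM_gP]
  exact DFunLike.congr_fun this P

lemma gD_map {R S : Type*} [CommRing R] [CommRing S] (φ : R →+* S) (y : Fin 6 → R) :
    φ (gD y) = gD (fun i => φ (y i)) := by simp [gD]

lemma gDisc_map {R S : Type*} [CommRing R] [CommRing S] (φ : R →+* S) (y : Fin 6 → R) :
    φ (gDisc y) = gDisc (fun i => φ (y i)) := by
  simp [gDisc, map_ofNat φ 4, map_ofNat φ 18, map_ofNat φ 27]

lemma gP_sq : gP F 6 ^ 2 = gB F (gD X) := by
  have := gD_map (gB F : MvPolynomial (Fin 6) F →+* Rpoly F 1) X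
  rw [gP, gG_sq]
  refine Eq.trans ?_ this.symm
  congr 1
  funext i
  simp [gB, gP]

lemma adj_form (Q : MvPolynomial (Fin 7) F) :
    ∃ P0 P1, aeval (gP F) Q = gB F P0 + gP F 6 * gB F P1 := by
  induction Q using MvPolynomial.induction_on with
  | C a => exact ⟨C a, 0, by simp [gB]⟩
  | add p q hp hq =>
    obtain ⟨a, b, h⟩ := hp
    obtain ⟨c, d, h'⟩ := hq
    exact ⟨a + c, b + d, by rw [map_add, h, h', map_add, map_add]; ring⟩
  | mul_X p i hp =>
    obtain ⟨a, b, h⟩ := hp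
    induction i using Fin.lastCases with
    | last =>
      refine ⟨gD X * b, a, ?_⟩
      rw [map_mul, h, aeval_X, map_mul, ← gP_sq]
      change _ * gP F 6 = _
      ring
    | cast i =>
      refine ⟨a * X i, b * X i, ?_⟩
      have : gB F (X i) = gP F i.castSucc := by simp [gB]
      rw [map_mul, h, aeval_X, map_mul, map_mul, this]
      ring

lemma cancel_aux (h2 : (2 : F) ≠ 0) (h : MvPolynomial (Fin 6) F)
    (θ : Fin 6 → MvPolynomial (Fin 5) F) (hθ : aeval θ h = 0) (hdisc : gDisc θ ≠ 0)
    (hD : gD θ ≠ 0) (f : Rpoly F 1) (P0 P1 : MvPolynomial (Fin 6) F)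
    (hf : f * gB F h = gB F P0 + gP F 6 * gB F P1) : aeval θ P0 = 0 ∧ aeval θ P1 = 0 := by
  let K := AlgebraicClosure F
  have h2K : (2 : K) ≠ 0 := by
    intro h
    apply h2
    apply (algebraMap F K).injective
    rw [map_ofNat, h, map_zero]
  have hinf : Infinite K := IsAlgClosed.instInfinite
  have hcomp : ∀ (x : Fin 5 → K) (P : MvPolynomial (Fin 6) F),
      aeval x (aeval θ P) = aeval (fun i => aeval x (θ i)) P := by
    intro x P
    have : (aeval (R := F) x).comp (aeval θ) = aeval (fun i => aeval x (θ i)) := by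
      apply MvPolynomial.algHom_ext
      intro i; simp
    exact DFunLike.congr_fun this P
  have main : ∀ x : Fin 5 → K, aeval x (gDisc θ) ≠ 0 →
      aeval x (aeval θ P0) = 0 ∧ aeval x (aeval θ P1) * aeval x (gD θ) = 0 := by
    intro x hx
    have e1 : aeval x (gDisc θ) = gDisc (fun i => aeval x (θ i)) :=
      gDisc_map (aeval (R := F) x : MvPolynomial (Fin 5) F →+* K) θ
    have e2 : aeval x (gD θ) = gD (fun i => aeval x (θ i)) :=
      gD_map (aeval (R := F) x : MvPolynomial (Fin 5) F →+* K) θ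
    rw [e1] at hx
    obtain ⟨M, hM⟩ := exists_hit h2K _ hx
    have hM1 : (fun i : Fin 6 => gG M i.castSucc) = fun i => aeval x (θ i) := funext hM
    have hM2 : (fun i : Fin 6 => gG Mᵀ i.castSucc) = fun i => aeval x (θ i) := by
      rw [← hM1]; funext i; exact (gG_transpose M).1 i
    have a1 := congrArg (evM M) hf
    have a2 := congrArg (evM Mᵀ) hf
    rw [map_mul, map_add, map_mul, gB_evM, gB_evM, gB_evM, evM_gP, hM1, ← hcomp, ← hcomp,
      ← hcomp, hθ, map_zero, mul_zero] at a1
    rw [map_mul, map_add, map_mul, gB_evM, gB_evM, gB_evM, evM_gP, hM2, ← hcomp, ← hcomp,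
      ← hcomp, hθ, map_zero, mul_zero, (gG_transpose M).2] at a2
    have hsq := gG_sq M
    rw [hM1, ← e2] at hsq
    rw [← hsq]
    constructor
    · have : 2 * aeval x (aeval θ P0) = 0 := by linear_combination - a1 - a2
      exact (mul_eq_zero.mp this).resolve_left h2K
    · have : 2 * (gG M 6 * aeval x (aeval θ P1)) = 0 := by linear_combination - a1 + a2
      have := (mul_eq_zero.mp this).resolve_left h2K
      linear_combination gG M 6 * this
  constructor
  · have : aeval θ P0 * gDisc θ = 0 := by
      apply zero_of_aeval (K := K)
      intro x
      rw [map_mul]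
      by_cases hx : aeval x (gDisc θ) = 0
      · rw [hx, mul_zero]
      · rw [(main x hx).1, zero_mul]
    exact (mul_eq_zero.mp this).resolve_right hdisc
  · have : aeval θ P1 * gD θ * gDisc θ = 0 := by
      apply zero_of_aeval (K := K)
      intro x
      rw [map_mul, map_mul]
      by_cases hx : aeval x (gDisc θ) = 0
      · rw [hx, mul_zero]
      · rw [(main x hx).2, zero_mul]
    exact (mul_eq_zero.mp ((mul_eq_zero.mp this).resolve_right hdisc)).resolve_right hD

lemma dvd_q0 (P : MvPolynomial (Fin 6) F)
    (hP : aeval (![X 0, X 1, X 2, 0, X 3, X 4] : Fin 6 → MvPolynomial (Fin 5) F) P = 0) :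
    X 3 ∣ P := by
  have key : ∀ P : MvPolynomial (Fin 6) F, X 3 ∣ P -
      aeval (![X 0, X 1, X 2, X 4, X 5] : Fin 5 → MvPolynomial (Fin 6) F)
        (aeval (![X 0, X 1, X 2, 0, X 3, X 4] : Fin 6 → MvPolynomial (Fin 5) F) P) := by
    intro P
    induction P using MvPolynomial.induction_on with
    | C a => simp
    | add p q hp hq =>
      have := dvd_add hp hq
      rw [map_add, map_add]
      convert this using 1; ring
    | mul_X p i hp =>
      have hi : (X 3 : MvPolynomial (Fin 6) F) ∣ X i -
        aeval (![X 0, X 1, X 2, X 4, X 5] : Fin 5 → MvPolynomial (Fin 6) F)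
        (aeval (![X 0, X 1, X 2, 0, X 3, X 4] : Fin 6 → MvPolynomial (Fin 5) F)
          (X i : MvPolynomial (Fin 6) F)) := by
        fin_cases i <;> simp
      obtain ⟨u, hu⟩ := hp
      obtain ⟨w, hw⟩ := hi
      refine ⟨u * X i + aeval (![X 0, X 1, X 2, X 4, X 5] : Fin 5 → MvPolynomial (Fin 6) F)
        (aeval (![X 0, X 1, X 2, 0, X 3, X 4] : Fin 6 → MvPolynomial (Fin 5) F) p) * w, ?_⟩
      rw [map_mul, map_mul]
      linear_combination X i * hu + aeval (![X 0, X 1, X 2, X 4, X 5] : Fin 5 → MvPolynomial (Fin 6) F)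
        (aeval (![X 0, X 1, X 2, 0, X 3, X 4] : Fin 6 → MvPolynomial (Fin 5) F) p) * hw
  have := key P
  rwa [hP, map_zero, sub_zero] at this

lemma dvd_q1 (h2 : (2 : F) ≠ 0) (P : MvPolynomial (Fin 6) F)
    (hP : aeval (![X 0, X 1, X 2, X 3 ^ 2, X 3 * X 4, X 4 ^ 2] :
      Fin 6 → MvPolynomial (Fin 5) F) P = 0) :
    X 3 * X 5 - X 4 ^ 2 ∣ P := by
  have key : ∀ P : MvPolynomial (Fin 6) F, ∃ A B : MvPolynomial (Fin 5) F,
      X 3 * X 5 - X 4 ^ 2 ∣ P -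
      (aeval (![X 0, X 1, X 2, X 3, X 5] : Fin 5 → MvPolynomial (Fin 6) F) A +
        X 4 * aeval (![X 0, X 1, X 2, X 3, X 5] : Fin 5 → MvPolynomial (Fin 6) F) B) := by
    intro P
    induction P using MvPolynomial.induction_on with
    | C a => exact ⟨C a, 0, by simp⟩
    | add p q hp hq =>
      obtain ⟨A, B, u, h⟩ := hp
      obtain ⟨A', B', u', h'⟩ := hq
      refine ⟨A + A', B + B', u + u', ?_⟩
      rw [map_add, map_add]
      linear_combination h + h'
    | mul_X p i hp =>
      obtain ⟨A, B, u, h⟩ := hp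
      have easy : ∀ (i : Fin 6) (j : Fin 5),
          aeval (![X 0, X 1, X 2, X 3, X 5] : Fin 5 → MvPolynomial (Fin 6) F)
            (X j : MvPolynomial (Fin 5) F) = X i →
          ∃ A B : MvPolynomial (Fin 5) F, X 3 * X 5 - X 4 ^ 2 ∣ p * X i -
            (aeval (![X 0, X 1, X 2, X 3, X 5] : Fin 5 → MvPolynomial (Fin 6) F) A +
            X 4 * aeval (![X 0, X 1, X 2, X 3, X 5] : Fin 5 → MvPolynomial (Fin 6) F) B) := by
        intro i j hij
        refine ⟨A * X j, B * X j, u * X i, ?_⟩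
        rw [map_mul, map_mul, hij]
        linear_combination X i * h
      fin_cases i
      · exact easy 0 0 (by simp)
      · exact easy 1 1 (by simp)
      · exact easy 2 2 (by simp)
      · exact easy 3 3 (by simp)
      · refine ⟨X 3 * X 4 * B, A, u * X 4 -
          aeval (![X 0, X 1, X 2, X 3, X 5] : Fin 5 → MvPolynomial (Fin 6) F) B, ?_⟩
        have hX3 : aeval (![X 0, X 1, X 2, X 3, X 5] : Fin 5 → MvPolynomial (Fin 6) F)
          (X 3 : MvPolynomial (Fin 5) F) = X 3 := by simp
        have hX4 : aeval (![X 0, X 1, X 2, X 3, X 5] : Fin 5 → MvPolynomial (Fin 6) F)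
          (X 4 : MvPolynomial (Fin 5) F) = X 5 := by simp
        rw [map_mul, map_mul, hX3, hX4]
        change p * X 4 - _ = _
        linear_combination X 4 * h
      · exact easy 5 4 (by simp)
  obtain ⟨A, B, u, h⟩ := key P
  let K := AlgebraicClosure F
  have h2K : (2 : K) ≠ 0 := by
    intro h
    apply h2
    apply (algebraMap F K).injective
    rw [map_ofNat, h, map_zero]
  have hinf : Infinite K := IsAlgClosed.instInfinite
  have hpt : ∀ z : Fin 5 → K, ∃ a : K, a * a = z 3 * z 4 ∧
      aeval z A + a * aeval z B = 0 ∧ aeval z A - a * aeval z B = 0 := by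
    intro z
    obtain ⟨a, ha⟩ := IsAlgClosed.exists_eq_mul_self (z 3)
    obtain ⟨b, hb⟩ := IsAlgClosed.exists_eq_mul_self (z 4)
    have gen : ∀ c : K, z 3 = c * c → aeval z A + c * b * aeval z B = 0 := by
      intro c hc
      have hP' := congrArg (aeval (R := F) (![z 0, z 1, z 2, c, b] : Fin 5 → K)) hP
      have e1 : ∀ Q : MvPolynomial (Fin 6) F, aeval (R := F) (![z 0, z 1, z 2, c, b] : Fin 5 → K)
        (aeval (![X 0, X 1, X 2, X 3 ^ 2, X 3 * X 4, X 4 ^ 2] :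
          Fin 6 → MvPolynomial (Fin 5) F) Q) =
          aeval (![z 0, z 1, z 2, c ^ 2, c * b, b ^ 2] : Fin 6 → K) Q := by
        intro Q
        have : (aeval (R := F) (![z 0, z 1, z 2, c, b] : Fin 5 → K)).comp
          (aeval (![X 0, X 1, X 2, X 3 ^ 2, X 3 * X 4, X 4 ^ 2] :
          Fin 6 → MvPolynomial (Fin 5) F)) =
          aeval (![z 0, z 1, z 2, c ^ 2, c * b, b ^ 2] : Fin 6 → K) := by
          apply MvPolynomial.algHom_ext
          intro i; fin_cases i <;> simp
        exact DFunLike.congr_fun this Q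
      have e2 : ∀ Q : MvPolynomial (Fin 5) F,
          aeval (R := F) (![z 0, z 1, z 2, c ^ 2, c * b, b ^ 2] : Fin 6 → K)
          (aeval (![X 0, X 1, X 2, X 3, X 5] : Fin 5 → MvPolynomial (Fin 6) F) Q) =
          aeval z Q := by
        intro Q
        have : (aeval (R := F) (![z 0, z 1, z 2, c ^ 2, c * b, b ^ 2] : Fin 6 → K)).comp
          (aeval (![X 0, X 1, X 2, X 3, X 5] : Fin 5 → MvPolynomial (Fin 6) F)) = aeval z := by
          apply MvPolynomial.algHom_ext
          intro i
          fin_cases i <;> simp [hb, hc, pow_two]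
        exact DFunLike.congr_fun this Q
      rw [e1, map_zero] at hP'
      have h' := congrArg (aeval (R := F) (![z 0, z 1, z 2, c ^ 2, c * b, b ^ 2] : Fin 6 → K)) h
      rw [map_sub, map_add, map_mul, e2, e2, hP'] at h'
      simp at h'
      linear_combination -h'
    refine ⟨a * b, by rw [ha, hb]; ring, gen a ha, ?_⟩
    have := gen (-a) (by rw [ha]; ring)
    linear_combination this
  have hA : A = 0 := by
    apply zero_of_aeval (K := K)
    intro z
    obtain ⟨a, -, h1, h3⟩ := hpt z
    have : 2 * aeval z A = 0 := by linear_combination h1 + h3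
    exact (mul_eq_zero.mp this).resolve_left h2K
  have hB : B = 0 := by
    have : X 3 * X 4 * B = 0 := by
      apply zero_of_aeval (K := K)
      intro z
      obtain ⟨a, ha, h1, h3⟩ := hpt z
      have : 2 * (a * aeval z B) = 0 := by linear_combination h1 - h3
      have := (mul_eq_zero.mp this).resolve_left h2K
      rw [map_mul, map_mul, aeval_X, aeval_X, ← ha]
      linear_combination a * this
    exact (mul_eq_zero.mp this).resolve_left (mul_ne_zero (X_ne_zero _) (X_ne_zero _))
  exact ⟨u, by rw [← h, hA, hB]; simp⟩

lemma dT_ne (h2 : (2 : F) ≠ 0) : gB F (X 3) ≠ 0 ∧ gB F (X 3 * X 5 - X 4 ^ 2) ≠ 0 := by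
  have : gB F (X 3) * gB F (X 3 * X 5 - X 4 ^ 2) ≠ 0 := by
    rw [← map_mul]
    intro h
    have := congrArg (evM (slMat (C (1/2)) (X 0) (X 1) (X 2) (X 3) (X 4) (X 5) :
        Matrix _ _ (MvPolynomial (Fin 6) F))) h
    rw [gB_evM, map_zero, gG_slMat _ _ _ _ _ _ _ (by rw [← map_ofNat C 2, ← C_mul]; simp [h2]),
      core_sl] at this
    simp only [map_mul, map_sub, map_pow, aeval_X] at this
    have h' : (X 5 ^ 2 * (X 5 ^ 4 * X 3 ^ 2) : MvPolynomial (Fin 6) F) = 0 := by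
      rw [← this]; simp; ring
    have h5 : (X 5 : MvPolynomial (Fin 6) F) ≠ 0 := X_ne_zero _
    have h3 : (X 3 : MvPolynomial (Fin 6) F) ≠ 0 := X_ne_zero _
    exact mul_ne_zero (pow_ne_zero 2 h5) (mul_ne_zero (pow_ne_zero 4 h5) (pow_ne_zero 2 h3)) h'
  exact ⟨left_ne_zero_of_mul this, right_ne_zero_of_mul this⟩

/-- having the normal form -/
def NF (f : Rpoly F 1) : Prop := ∃ P0 P1, f = gB F P0 + gP F 6 * gB F P1

lemma NF_cancel (h : MvPolynomial (Fin 6) F) (hne : gB F h ≠ 0)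
    (H : ∀ f P0 P1, f * gB F h = gB F P0 + gP F 6 * gB F P1 → h ∣ P0 ∧ h ∣ P1)
    (f : Rpoly F 1) (hf : NF (f * gB F h)) : NF f := by
  obtain ⟨P0, P1, e⟩ := hf
  obtain ⟨⟨a, rfl⟩, ⟨b, rfl⟩⟩ := H f P0 P1 e
  refine ⟨a, b, mul_right_cancel₀ hne ?_⟩
  rw [e, map_mul, map_mul]; ring

lemma NF_q0 (h2 : (2 : F) ≠ 0) (f : Rpoly F 1) (hf : NF (f * gB F (X 3))) : NF f := by
  refine NF_cancel _ (dT_ne h2).1 ?_ f hf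
  intro f P0 P1 e
  have := cancel_aux h2 (X 3) ![X 0, X 1, X 2, 0, X 3, X 4] (by simp) ?_ ?_ f P0 P1 e
  · exact ⟨dvd_q0 _ this.1, dvd_q0 _ this.2⟩
  · intro h
    have := congrArg (aeval (![0,1,0,0,0] : Fin 5 → F)) h
    simp [gDisc] at this
    exact h2 (by
      have h4 : (2 : F) * 2 = 0 := by norm_num; exact this
      exact mul_self_eq_zero.mp h4)
  · intro h
    have := congrArg (aeval (![0,0,0,0,1] : Fin 5 → F)) h
    simp [gD] at this

lemma NF_q1 (h2 : (2 : F) ≠ 0) (f : Rpoly F 1) (hf : NF (f * gB F (X 3 * X 5 - X 4 ^ 2))) :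
    NF f := by
  refine NF_cancel _ (dT_ne h2).2 ?_ f hf
  intro f P0 P1 e
  have := cancel_aux h2 (X 3 * X 5 - X 4 ^ 2) ![X 0, X 1, X 2, X 3 ^ 2, X 3 * X 4, X 4 ^ 2]
    (by simp; ring) ?_ ?_ f P0 P1 e
  · exact ⟨dvd_q1 h2 _ this.1, dvd_q1 h2 _ this.2⟩
  · intro h
    have := congrArg (aeval (![0,1,0,0,0] : Fin 5 → F)) h
    simp [gDisc] at this
    exact h2 (by
      have h4 : (2 : F) * 2 = 0 := by norm_num; exact this
      exact mul_self_eq_zero.mp h4)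
  · intro h
    have := congrArg (aeval (![0,0,0,0,1] : Fin 5 → F)) h
    simp [gD] at this

lemma NF_hom (h2 : (2 : F) ≠ 0) [Infinite F] {f : Rpoly F 1} {n : ℕ} (hf : f ∈ invAlg F 1)
    (hn : f.IsHomogeneous n) : NF f := by
  obtain ⟨N, Q, h⟩ := inv_frac h2 hf hn
  have hNF : NF (f * aeval (gP F) (dT F) ^ N) := by
    rw [h]; exact adj_form Q
  have hdT : aeval (gP F) (dT F) = gB F (X 3 * X 5 - X 4 ^ 2) * gB F (X 3) := by
    simp [dT, gB]; ring
  rw [hdT] at hNF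
  clear h
  induction N with
  | zero => simpa using hNF
  | succ N ih =>
    apply ih
    apply NF_q1 h2
    apply NF_q0 h2
    rw [pow_succ, ← mul_assoc, ← mul_assoc] at hNF
    exact hNF

end Aux5

section Aux6

variable {F : Type} [Field F]

lemma act_hom {f : Rpoly F 1} {n : ℕ} (hn : f.IsHomogeneous n) (g : Matrix (Fin 3) (Fin 3) F) :
    (actHom F 1 g f).IsHomogeneous n := by
  have := hn.aeval (n := 1) (fun p : Fin 3 × Fin 3 × Fin 1 =>
    ((g.map (algebraMap F (Rpoly F 1)))ᵀ * genMat F 1 p.2.2 *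
      g.map (algebraMap F (Rpoly F 1))) p.1 p.2.1) ?_
  · rw [one_mul] at this
    exact this
  · intro p
    simp only [Matrix.mul_apply]
    refine IsHomogeneous.sum _ _ _ fun j _ => ?_
    have h1 : IsHomogeneous (∑ k, (g.map (algebraMap F (Rpoly F 1)))ᵀ p.1 k *
        genMat F 1 p.2.2 k j) 1 := by
      refine IsHomogeneous.sum _ _ _ fun k _ => ?_
      have := (isHomogeneous_C (Fin 3 × Fin 3 × Fin 1) (g k p.1)).mul
        (isHomogeneous_X F ((k, j, p.2.2) : Fin 3 × Fin 3 × Fin 1))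
      rwa [zero_add] at this
    exact h1.mul (isHomogeneous_C (Fin 3 × Fin 3 × Fin 1) (g j p.2.1))

lemma act_comp (f : Rpoly F 1) (n : ℕ) (g : Matrix (Fin 3) (Fin 3) F) :
    actHom F 1 g (homogeneousComponent n f) = homogeneousComponent n (actHom F 1 g f) := by
  induction f using MvPolynomial.induction_on' with
  | monomial u a =>
    have h : (monomial u a : Rpoly F 1).IsHomogeneous u.degree := isHomogeneous_monomial a rfl
    rw [homogeneousComponent_of_mem h, homogeneousComponent_of_mem (act_hom h g)]
    split_ifs <;> simp
  | add p q hp hq => rw [map_add, map_add, map_add, map_add, hp, hq]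

lemma comp_mem {f : Rpoly F 1} (hf : f ∈ invAlg F 1) (n : ℕ) :
    homogeneousComponent n f ∈ invAlg F 1 := by
  intro g hg
  rw [act_comp, hf g hg]

lemma NF_all (h2 : (2 : F) ≠ 0) [Infinite F] {f : Rpoly F 1} (hf : f ∈ invAlg F 1) : NF f := by
  rw [← sum_homogeneousComponent f]
  apply Finset.sum_induction _ NF
  · rintro a b ⟨A, B, rfl⟩ ⟨A', B', rfl⟩
    exact ⟨A + A', B + B', by rw [map_add, map_add]; ring⟩
  · exact ⟨0, 0, by simp⟩
  · intro i _
    exact NF_hom h2 (comp_mem hf i) (homogeneousComponent_isHomogeneous i f)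

lemma cc_zero {f : Rpoly F 1} {n : ℕ} (h0 : 0 < n) (hf : f.IsHomogeneous n) :
    constantCoeff f = 0 := by
  rw [constantCoeff_eq]
  apply hf.coeff_eq_zero
  simpa using h0.ne

lemma cc_plus (x : invAlg F 1) (hx : x ∈ plusIdeal F 1) : constantCoeff (x : Rpoly F 1) = 0 := by
  have : plusIdeal F 1 ≤ RingHom.ker ((constantCoeff (R := F)
      (σ := Fin 3 × Fin 3 × Fin 1)).comp (invAlg F 1).val.toRingHom) := by
    apply Ideal.span_le.mpr
    rintro f ⟨n, h0, hn⟩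
    exact cc_zero h0 hn
  exact this hx

lemma gP6_ne (h2 : (2 : F) ≠ 0) : gP F 6 ≠ 0 := by
  intro h
  have := congrArg (evM (slMat (C (1/2)) (X 0) (X 1) (X 2) (X 3) (X 4) (X 5) :
        Matrix _ _ (MvPolynomial (Fin 6) F))) h
  rw [evM_gP, map_zero, gG_slMat _ _ _ _ _ _ _ (by rw [← map_ofNat C 2, ← C_mul]; simp [h2]),
      core_sl] at this
  have h' : (X 4 * X 5 * (X 3 ^ 2 * X 5 ^ 2) : MvPolynomial (Fin 6) F) = 0 := by
    rw [← this]; rfl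
  have h5 : (X 5 : MvPolynomial (Fin 6) F) ≠ 0 := X_ne_zero _
  have h3 : (X 3 : MvPolynomial (Fin 6) F) ≠ 0 := X_ne_zero _
  have h4 : (X 4 : MvPolynomial (Fin 6) F) ≠ 0 := X_ne_zero _
  exact mul_ne_zero (mul_ne_zero h4 h5) (mul_ne_zero (pow_ne_zero 2 h3) (pow_ne_zero 2 h5)) h'

lemma tau_gB (P : MvPolynomial (Fin 6) F) :
    evM (genMat F 1 0)ᵀ (gB F P) = gB F P := by
  have e : (fun i : Fin 6 => gG (genMat F 1 0)ᵀ i.castSucc) = fun i => gP F i.castSucc :=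
    funext fun i => (gG_transpose _).1 i
  rw [gB_evM, e, gB]

lemma tau_gP : evM (genMat F 1 0)ᵀ (gP F 6) = - gP F 6 := by
  rw [evM_gP]
  exact (gG_transpose _).2

lemma cc_gP6 : constantCoeff (gP F 6) = 0 :=
  cc_zero (n := 6) (by norm_num) (gP_hom 6)

lemma tau_sq (h2 : (2 : F) ≠ 0) [Infinite F] (x : invAlg F 1) (hx : x ∈ plusIdeal F 1 ^ 2) :
    ∃ R : Rpoly F 1, constantCoeff R = 0 ∧
      (x : Rpoly F 1) - evM (genMat F 1 0)ᵀ (x : Rpoly F 1) = gP F 6 * R := by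
  rw [pow_two] at hx
  refine Submodule.mul_induction_on hx ?_ ?_
  · intro a ha b hb
    have ca := cc_plus a ha
    have cb := cc_plus b hb
    obtain ⟨P0, P1, ea⟩ := NF_all h2 a.2
    obtain ⟨Q0, Q1, eb⟩ := NF_all h2 b.2
    rw [ea, map_add, map_mul, cc_gP6, zero_mul, add_zero] at ca
    rw [eb, map_add, map_mul, cc_gP6, zero_mul, add_zero] at cb
    refine ⟨2 * (gB F P0 * gB F Q1 + gB F P1 * gB F Q0), ?_, ?_⟩
    · rw [map_mul, map_add, map_mul, map_mul, ca, cb]; ring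
    · rw [MulMemClass.coe_mul, ea, eb]
      simp only [map_mul, map_add, tau_gB, tau_gP]
      ring
  · rintro a b ⟨R, hR, e⟩ ⟨R', hR', e'⟩
    refine ⟨R + R', by rw [map_add, hR, hR', add_zero], ?_⟩
    rw [AddMemClass.coe_add, map_add]
    linear_combination e + e'

lemma six_mem (h2 : (2 : F) ≠ 0) [Infinite F] : gP F 6 ∉ decompSet F 1 := by
  rintro ⟨x, hx, e⟩
  obtain ⟨R, hR, h⟩ := tau_sq h2 x hx
  rw [e, tau_gP] at h
  have h' : gP F 6 * R = gP F 6 * C 2 := by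
    rw [← h, map_ofNat C 2]; ring
  have := mul_left_cancel₀ (gP6_ne h2) h'
  rw [this, constantCoeff_C] at hR
  exact h2 hR

lemma NF_aeval {f : Rpoly F 1} (hf : NF f) : ∃ Q : MvPolynomial (Fin 7) F, f = aeval (gP F) Q := by
  obtain ⟨P0, P1, rfl⟩ := hf
  have : ∀ P, gB F P = aeval (gP F) (rename Fin.castSucc P) := by
    intro P
    rw [aeval_rename]; rfl
  refine ⟨rename Fin.castSucc P0 + X 6 * rename Fin.castSucc P1, ?_⟩
  rw [map_add, map_mul, aeval_X, this, this]

lemma mon_hom (m : Fin 7 →₀ ℕ) (a : F) : (aeval (gP F) (monomial m a)).IsHomogeneous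
    (∑ i, (![1,2,3,2,3,4,6] : Fin 7 → ℕ) i * m i) := by
  rw [aeval_monomial, Finsupp.prod_fintype _ _ (by simp)]
  have h1 : IsHomogeneous (∏ i, gP F i ^ m i) (∑ i, (![1,2,3,2,3,4,6] : Fin 7 → ℕ) i * m i) :=
    IsHomogeneous.prod _ _ _ fun i _ => (gP_hom i).pow (m i)
  have := (isHomogeneous_C (Fin 3 × Fin 3 × Fin 1) a).mul h1
  rwa [zero_add] at this

lemma aeval_mem (h2 : ringChar F ≠ 2) (Q : MvPolynomial (Fin 7) F) :
    aeval (gP F) Q ∈ invAlg F 1 := by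
  induction Q using MvPolynomial.induction_on with
  | C a => rw [aeval_C]; exact (invAlg F 1).algebraMap_mem a
  | add p q hp hq => rw [map_add]; exact add_mem hp hq
  | mul_X p i hp => rw [map_mul, aeval_X]; exact mul_mem hp (gP_mem h2 i)

lemma upper (h2 : ringChar F ≠ 2) (n : ℕ) (hn : 6 < n) (Q : MvPolynomial (Fin 7) F) :
    homogeneousComponent n (aeval (gP F) Q) ∈ decompSet F 1 := by
  induction Q using MvPolynomial.induction_on' with
  | monomial m a =>
    have hh := mon_hom m a
    rw [homogeneousComponent_of_mem hh]
    split_ifs with hW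
    · have hex : ∃ i, m i ≠ 0 := by
        by_contra! hc
        simp [hc] at hW
        omega
      obtain ⟨i, hi⟩ := hex
      let m' := m - Finsupp.single i 1
      have hm : m = m' + Finsupp.single i 1 := by
        rw [tsub_add_cancel_of_le]
        rw [Finsupp.single_le_iff]
        omega
      have hfac : aeval (gP F) (monomial m a) = aeval (gP F) (monomial m' a) * gP F i := by
        rw [hm, ← aeval_X (R := F) (gP F) i, ← map_mul, X, monomial_mul, mul_one]
      have hsum : n = (∑ j, (![1,2,3,2,3,4,6] : Fin 7 → ℕ) j * m' j) +
          (![1,2,3,2,3,4,6] : Fin 7 → ℕ) i := by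
        rw [hW, hm]
        simp only [Finsupp.add_apply, mul_add, Finset.sum_add_distrib]
        congr 1
        rw [Finset.sum_eq_single i]
        · simp
        · intro j _ hj
          rw [Finsupp.single_apply, if_neg (Ne.symm hj), mul_zero]
        · simp
      have hdeg : (![1,2,3,2,3,4,6] : Fin 7 → ℕ) i ≤ 6 ∧
          0 < (![1,2,3,2,3,4,6] : Fin 7 → ℕ) i := by
        clear hsum hfac hm m' hi
        fin_cases i <;> simp
      refine ⟨⟨aeval (gP F) (monomial m' a), aeval_mem h2 _⟩ * ⟨gP F i, gP_mem h2 i⟩, ?_, ?_⟩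
      · rw [pow_two]
        apply Ideal.mul_mem_mul
        · exact Ideal.subset_span ⟨_, by omega, mon_hom m' a⟩
        · exact Ideal.subset_span ⟨_, hdeg.2, gP_hom i⟩
      · exact hfac.symm
    · exact ⟨0, Ideal.zero_mem _, rfl⟩
  | add p q hp hq =>
    obtain ⟨x, hx, e⟩ := hp
    obtain ⟨y, hy, e'⟩ := hq
    refine ⟨x + y, Ideal.add_mem _ hx hy, ?_⟩
    rw [map_add, map_add, ← e, ← e']; rfl

end Aux6

/-- if `char F ≠ 2` and `d = 1`, then `D_max = 6`: `6` is the greatest degree of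
an indecomposable homogeneous `O(3)`-invariant of a single generic `3×3` matrix. -/
theorem stmt19 (F : Type) [Field F] [Infinite F] (h2 : ringChar F ≠ 2) :
    IsGreatest {n : ℕ | ∃ f : Rpoly F 1, f ∈ invAlg F 1 ∧
      MvPolynomial.IsHomogeneous f n ∧ f ∉ decompSet F 1} 6 := by
  refine ⟨⟨gP F 6, gP_mem h2 6, gP_hom 6, six_mem (two_ne h2)⟩, ?_⟩
  rintro n ⟨f, hf, hn, hd⟩
  by_contra! hlt
  obtain ⟨Q, hQ⟩ := NF_aeval (NF_hom (two_ne h2) hf hn)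
  have := upper h2 n hlt Q
  rw [← hQ, homogeneousComponent_of_mem hn, if_pos rfl] at this
  exact hd this
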